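/- Let X be a normed linear space and let A be a nonempty bounded subset of X. If A is uniquely remotal and M-compact, then the set Far(A) = {a ∈ A : a is a farthest point from some x ∈ X} is M-compact. -/

import Mathlib

open Filter Topology

/-- The farthest distance of `x` from the set `A`: `D(x,A) = sup_{a ∈ A} ‖x - a‖`. -/
noncomputable def farDist {X : Type*} [NormedAddCommGroup X] (x : X) (A : Set X) : ℝ :=
  sSup ((fun a => ‖x - a‖) '' A)

/-- `F(x,A) = {a ∈ A : ‖x - a‖ = D(x,A)}`, the farthest points of `A` from `x`. -/
def farPoints {X : Type*} [NormedAddCommGroup X] (x : X) (A : Set X) : Set X :=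
  {a ∈ A | ‖x - a‖ = farDist x A}

/-- `A` is remotal if `F(x,A)` is nonempty for every `x`. -/
def Remotal {X : Type*} [NormedAddCommGroup X] (A : Set X) : Prop :=
  ∀ x : X, (farPoints x A).Nonempty

/-- `A` is uniquely remotal if `F(x,A)` is a singleton for every `x`. -/
def UniquelyRemotal {X : Type*} [NormedAddCommGroup X] (A : Set X) : Prop :=
  ∀ x : X, ∃ a : X, farPoints x A = {a}

/-- A sequence in `S` is maximizing if `‖x - a n‖ → D(x,S)` for some `x ∈ X`. -/
def MaximizingSeq {X : Type*} [NormedAddCommGroup X] (S : Set X) (a : ℕ → X) : Prop :=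
  (∀ n, a n ∈ S) ∧ ∃ x : X, Tendsto (fun n => ‖x - a n‖) atTop (𝓝 (farDist x S))

/-- `S` is M-compact if every maximizing sequence in `S` has a subsequence converging in `X`. -/
def MCompact {X : Type*} [NormedAddCommGroup X] (S : Set X) : Prop :=
  ∀ a : ℕ → X, MaximizingSeq S a →
    ∃ (φ : ℕ → ℕ) (l : X), StrictMono φ ∧ Tendsto (a ∘ φ) atTop (𝓝 l)

/-- `Far(A) = {a ∈ A : a ∈ F(x,A) for some x ∈ X}`. -/
def farSet {X : Type*} [NormedAddCommGroup X] (A : Set X) : Set X :=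
  {a : X | ∃ x : X, a ∈ farPoints x A}

-- We use Mathlib's `derivedSet A = {x | AccPt x (𝓟 A)}` for the set of limit points.

section

variable {X : Type*} [NormedAddCommGroup X] {A S : Set X} {a x : X}

theorem norm_sub_le_farDist (hbd : Bornology.IsBounded A) (x : X) (ha : a ∈ A) :
    ‖x - a‖ ≤ farDist x A := by
  obtain ⟨r, hr⟩ := hbd.subset_closedBall x
  have hbdd : BddAbove ((fun b => ‖x - b‖) '' A) :=
    ⟨r, Set.forall_mem_image.2 fun _ hb => mem_closedBall_iff_norm'.1 (hr hb)⟩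
  exact le_csSup hbdd (Set.mem_image_of_mem _ ha)

theorem farSet_subset (A : Set X) : farSet A ⊆ A :=
  fun _ ⟨_, ha⟩ => ha.1

theorem farPoints_subset_farSet (x : X) (A : Set X) : farPoints x A ⊆ farSet A :=
  fun _ ha => ⟨x, ha⟩

theorem farDist_eq_of_subset (hbd : Bornology.IsBounded A) (hSA : S ⊆ A)
    (h : (S ∩ farPoints x A).Nonempty) : farDist x S = farDist x A := by
  obtain ⟨a, haS, -, ha⟩ := h
  exact IsGreatest.csSup_eq
    ⟨⟨a, haS, ha⟩, Set.forall_mem_image.2 fun _ hb => norm_sub_le_farDist hbd x (hSA hb)⟩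

theorem Remotal.farDist_farSet (hA : Remotal A) (hbd : Bornology.IsBounded A) (x : X) :
    farDist x (farSet A) = farDist x A := by
  obtain ⟨a, ha⟩ := hA x
  exact farDist_eq_of_subset hbd (farSet_subset A) ⟨a, farPoints_subset_farSet x A ha, ha⟩

theorem UniquelyRemotal.remotal (hA : UniquelyRemotal A) : Remotal A := fun x => by
  obtain ⟨a, ha⟩ := hA x
  exact ha ▸ Set.singleton_nonempty a

theorem MCompact.of_subset (hA : MCompact A) (hSA : S ⊆ A)
    (hdist : ∀ x, farDist x S = farDist x A) : MCompact S := by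
  rintro a ⟨haS, x, hx⟩
  exact hA a ⟨fun n => hSA (haS n), x, hdist x ▸ hx⟩

theorem stmt_6_general (hbd : Bornology.IsBounded A) (hA : Remotal A) (hM : MCompact A) :
    MCompact (farSet A) :=
  hM.of_subset (farSet_subset A) (hA.farDist_farSet hbd)

end

theorem stmt_6 {X : Type*} [NormedAddCommGroup X] [NormedSpace ℝ X]
    (A : Set X) (hne : A.Nonempty) (hbd : Bornology.IsBounded A)
    (hur : UniquelyRemotal A) (hM : MCompact A) : MCompact (farSet A) :=
  stmt_6_general hbd hur.remotal hM
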